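/- arXiv:2207.07053 — 3 statements merged into one kernel-verified Lean document; each statement's English description precedes it below -/
import Mathlib

section
/- Let X be a complete ordered family of equivalences (COFE), let f : X → X be contractive, and let x₀ : X. Then the sequence u n := f^[n] x₀ (the n-th iterate of f applied to x₀) is Cauchy, every limit l of u satisfies f l = l, and f has exactly one fixed point. -/
/-!
The relation `≈[0]` is total, so by contractivity `f^[n] x ≈[n] f^[n] y` for all `x`, `y`
(`OFE.Contractive.iterate_rel`). Every `f^[i] x₀` with `i ≥ n` has the form `f^[n] y`, so all of
them are `≈[n]`-equivalent and the sequence of iterates is Cauchy. If `l` is a limit, then for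
large `i` both `f^[i + 1] x₀ ≈[n] l` and `f^[i + 1] x₀ ≈[n] f l`, hence `f l = l` by separation.
Two fixed points are `n`-th iterates of themselves for every `n`, hence `≈[n]`-equivalent for
all `n`, hence equal.
-/

/-- An ordered family of equivalences (OFE) on a type `X`. -/
structure OFE (X : Type*) where
  rel : ℕ → X → X → Prop
  equiv : ∀ n, Equivalence (rel n)
  total_zero : ∀ x y, rel 0 x y
  mono : ∀ n x y, rel (n + 1) x y → rel n x y
  ext : ∀ x y, (∀ n, rel n x y) → x = y

/-- A sequence is Cauchy for an OFE. -/
def OFE.IsCauchy {X : Type*} (O : OFE X) (u : ℕ → X) : Prop :=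
  ∀ n, ∃ m, ∀ i j, m ≤ i → m ≤ j → O.rel n (u i) (u j)

/-- `l` is a limit of the sequence `u`. -/
def OFE.IsLimit {X : Type*} (O : OFE X) (u : ℕ → X) (l : X) : Prop :=
  ∀ n, ∃ m, ∀ i, m ≤ i → O.rel n (u i) l

/-- A complete OFE (COFE): every Cauchy sequence has a limit. -/
def OFE.IsComplete {X : Type*} (O : OFE X) : Prop :=
  ∀ u : ℕ → X, O.IsCauchy u → ∃ l, O.IsLimit u l

/-- A function is contractive. -/
def OFE.Contractive {X : Type*} (O : OFE X) (f : X → X) : Prop :=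
  ∀ n x y, O.rel n x y → O.rel (n + 1) (f x) (f y)

/-- The metric induced by an OFE. -/
noncomputable def OFE.dist {X : Type*} (O : OFE X) (x y : X) : ℝ :=
  sInf {r : ℝ | ∃ n : ℕ, O.rel n x y ∧ r = (2 : ℝ) ^ (-(n : ℤ))}

theorem OFE.Contractive.iterate_rel {X : Type*} {O : OFE X} {f : X → X}
    (hf : O.Contractive f) (n : ℕ) (x y : X) : O.rel n (f^[n] x) (f^[n] y) := by
  induction n with
  | zero => exact O.total_zero _ _
  | succ n ih =>
    rw [Function.iterate_succ_apply', Function.iterate_succ_apply']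
    exact hf n _ _ ih

theorem banach_fixed_point {X : Type*} (O : OFE X) (hX : O.IsComplete)
    (f : X → X) (hf : O.Contractive f) (x₀ : X) :
    O.IsCauchy (fun n => f^[n] x₀) ∧
    (∀ l, O.IsLimit (fun n => f^[n] x₀) l → f l = l) ∧
    (∃! x, f x = x) := by
  have hC : O.IsCauchy (fun n => f^[n] x₀) := by
    intro n
    refine ⟨n, fun i j hi hj => ?_⟩
    obtain ⟨a, rfl⟩ := Nat.exists_eq_add_of_le hi
    obtain ⟨b, rfl⟩ := Nat.exists_eq_add_of_le hj
    simp only [Function.iterate_add_apply]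
    exact hf.iterate_rel n _ _
  have hL : ∀ l, O.IsLimit (fun n => f^[n] x₀) l → f l = l := by
    intro l hl
    refine O.ext _ _ fun n => ?_
    obtain ⟨m, hm⟩ := hl n
    have h₁ : O.rel n (f^[m + 1] x₀) l := hm (m + 1) (Nat.le_succ m)
    have h₂ : O.rel n (f^[m + 1] x₀) (f l) := by
      rw [Function.iterate_succ_apply']
      exact O.mono _ _ _ (hf n _ _ (hm m le_rfl))
    exact (O.equiv n).trans ((O.equiv n).symm h₂) h₁
  refine ⟨hC, hL, ?_⟩
  obtain ⟨l, hl⟩ := hX _ hC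
  refine ⟨l, hL l hl, fun y hy => O.ext _ _ fun n => ?_⟩
  have h := hf.iterate_rel n y l
  rwa [Function.iterate_fixed hy, Function.iterate_fixed (hL l hl)] at h
end

section
/- Let X be a complete ordered family of equivalences (COFE) and define d : X → X → ℝ by d x y = sInf { (2 : ℝ) ^ (-(n : ℤ)) | n : ℕ, x ≈[n] y }. Then (X, d) is a complete metric space in the following sense: for every sequence u : ℕ → X such that for all ε > 0 there exists N with d (u i) (u j) < ε for all i, j ≥ N, there exists l : X such that for all ε > 0 there exists N with d (u i) l < ε for all i ≥ N. -/
theorem OFE.rel_of_le {X : Type*} (O : OFE X) {x y : X} {m n : ℕ} (hmn : m ≤ n)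
    (h : O.rel n x y) : O.rel m x y := by
  induction hmn with
  | refl => exact h
  | step _ ih => exact ih (O.mono _ _ _ h)

theorem OFE.dist_le_of_rel {X : Type*} (O : OFE X) {x y : X} {n : ℕ} (h : O.rel n x y) :
    O.dist x y ≤ (2 : ℝ) ^ (-(n : ℤ)) := by
  refine csInf_le ⟨0, ?_⟩ ⟨n, h, rfl⟩
  rintro r ⟨k, -, rfl⟩
  positivity

theorem OFE.rel_of_dist_lt {X : Type*} (O : OFE X) {x y : X} {n : ℕ}
    (h : O.dist x y < (2 : ℝ) ^ (-(n : ℤ))) : O.rel n x y := by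
  unfold OFE.dist at h
  obtain ⟨r, ⟨k, hk, rfl⟩, hlt⟩ :=
    exists_lt_of_csInf_lt (by exact ⟨_, 0, O.total_zero x y, rfl⟩) h
  have hnk : -(k : ℤ) < -(n : ℤ) := (zpow_lt_zpow_iff_right₀ one_lt_two).1 hlt
  exact O.rel_of_le (by omega) hk

theorem cofe_metric_complete {X : Type*} (O : OFE X) (hX : O.IsComplete) :
    ∀ u : ℕ → X,
      (∀ ε : ℝ, 0 < ε → ∃ N, ∀ i j, N ≤ i → N ≤ j → O.dist (u i) (u j) < ε) →
      ∃ l : X, ∀ ε : ℝ, 0 < ε → ∃ N, ∀ i, N ≤ i → O.dist (u i) l < ε := by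
  intro u hu
  obtain ⟨l, hl⟩ := hX u fun n => by
    obtain ⟨N, hN⟩ := hu ((2 : ℝ) ^ (-(n : ℤ))) (by positivity)
    exact ⟨N, fun i j hi hj => O.rel_of_dist_lt (hN i j hi hj)⟩
  refine ⟨l, fun ε hε => ?_⟩
  obtain ⟨n, hn⟩ := exists_pow_lt_of_lt_one hε (by norm_num : (2 : ℝ)⁻¹ < 1)
  obtain ⟨N, hN⟩ := hl n
  refine ⟨N, fun i hi => (O.dist_le_of_rel (hN i hi)).trans_lt ?_⟩
  rwa [zpow_neg, zpow_natCast, ← inv_pow]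
end

section
/- Let D be an ωCPO and let (q i) be a sequence of elements of E(D) such that q i ≼ q j whenever i ≤ j. Then for each x : D the sequence i ↦ q i x is a monotone chain, and the map q∞ defined by q∞ x := ωSup (i ↦ q i x) satisfies: q∞ is continuous, q∞ ∘ q∞ = q∞, q∞ x ≤ x for all x (so q∞ ∈ E(D)); q i ≼ q∞ for every i; and for every r ∈ E(D) with q i ≼ r for all i, one has q∞ ≼ r. Hence q∞ is the least upper bound of the chain (q i) in (E(D), ≼). -/
open OmegaCompletePartialOrder

/-!
Since every `q i` is monotone and lies below the identity, the relations `q i ∘ q j = q i = q j ∘ q i`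
make `i ↦ q i x` increasing. The pointwise supremum `qInf` is continuous because suprema commute
with suprema. The key identity is `q i ∘ qInf = q i`, which follows from the sandwich
`q i x = q i (q i x) ≤ q i (qInf x) ≤ q i x`. It gives idempotence of `qInf`, because
`qInf (qInf x)` and `qInf x` are then suprema of the same family. The bound `r ∘ qInf = qInf` comes
from `q i x = r (q i x) ≤ r (qInf x) ≤ qInf x`.
-/

theorem lub_of_chain_of_idempotents {D : Type*} [OmegaCompletePartialOrder D]
    (q : ℕ → D → D)
    (hcont : ∀ i, ωScottContinuous (q i))
    (hidem : ∀ i, q i ∘ q i = q i)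
    (hbelow : ∀ i x, q i x ≤ x)
    (hchain : ∀ i j, i ≤ j → q i ∘ q j = q i ∧ q j ∘ q i = q i) :
    (∀ x : D, Monotone fun i => q i x) ∧
    ∀ qInf : D → D, (∀ x : D, IsLUB (Set.range fun i => q i x) (qInf x)) →
      ωScottContinuous qInf ∧
      qInf ∘ qInf = qInf ∧
      (∀ x, qInf x ≤ x) ∧
      (∀ i, q i ∘ qInf = q i ∧ qInf ∘ q i = q i) ∧
      (∀ r : D → D, ωScottContinuous r → r ∘ r = r → (∀ x, r x ≤ x) →
        (∀ i, q i ∘ r = q i ∧ r ∘ q i = q i) →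
        qInf ∘ r = qInf ∧ r ∘ qInf = qInf) := by
  have hmono (i : ℕ) : Monotone (q i) := (hcont i).monotone
  refine ⟨fun x i j hij => ?_, fun qInf hInf => ?_⟩
  · calc q i x = q j (q i x) := (congrFun (hchain i j hij).2 x).symm
      _ ≤ q j x := hmono j (hbelow i x)
  have hle (i : ℕ) (x : D) : q i x ≤ qInf x := (hInf x).1 ⟨i, rfl⟩
  have hlub {x y : D} (h : ∀ i, q i x ≤ y) : qInf x ≤ y :=
    (hInf x).2 (Set.forall_mem_range.2 h)
  have hInf_below (x : D) : qInf x ≤ x := hlub fun i => hbelow i x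
  have hInf_mono : Monotone qInf := fun x y hxy =>
    hlub fun i => (hmono i hxy).trans (hle i y)
  have hidem' (i : ℕ) (x : D) : q i (q i x) = q i x := congrFun (hidem i) x
  have hq_qInf (i : ℕ) : q i ∘ qInf = q i := funext fun x =>
    le_antisymm (hmono i (hInf_below x)) ((hidem' i x).ge.trans (hmono i (hle i x)))
  -- A map that every `q i` absorbs on the right is absorbed by `qInf` as well.
  have hcongr (f : D → D) (hf : ∀ i, q i ∘ f = q i) : qInf ∘ f = qInf := funext fun x =>
    le_antisymm (hlub fun i => (congrFun (hf i) x).le.trans (hle i x))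
      (hlub fun i => (congrFun (hf i) x).ge.trans (hle i (f x)))
  refine ⟨ωScottContinuous_iff_monotone_map_ωSup.2 ⟨hInf_mono, fun c => ?_⟩, hcongr qInf hq_qInf,
    hInf_below, fun i => ⟨hq_qInf i, funext fun x => ?_⟩, fun r hr _ hr_below hqr => ?_⟩
  · apply le_antisymm
    · refine hlub fun i => ?_
      rw [(hcont i).map_ωSup c]
      exact ωSup_le_ωSup_of_le fun n => ⟨n, hle i (c n)⟩
    · exact ωSup_le _ _ fun n => hInf_mono (le_ωSup c n)
  · exact le_antisymm (hInf_below _) ((hidem' i x).ge.trans (hle i _))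
  · exact ⟨hcongr r fun i => (hqr i).1, funext fun x => le_antisymm (hr_below _)
      (hlub fun i => (congrFun (hqr i).2 x).ge.trans (hr.monotone (hle i x)))⟩
end
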